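/- Run the Oblivious k-Shot schedule (3 ≤ k ≤ √n) under the k-shot semantics on any n-vertex radio network. Let F be the set of active vertices at the beginning of some stage. If |F| ≤ k/2, then during the next 2·|F| stages the progress increases by at least |F|; that is, the average progress per stage over these stages is at least 1/2. -/

import Mathlib

/-- Vertex `v`, first informed at step `T`, transmits at step `t` under the
`k`-shot semantics with schedule `𝒯`: we need `t > T`, `v ∈ 𝒯 t`, and `t` must be
among the first `k` steps after `T` at which `v` appears in a transmission set,
i.e. fewer than `k` steps `t'` with `T < t' < t` satisfy `v ∈ 𝒯 t'`. -/
def transmitsAt {n : ℕ} (𝒯 : ℕ → Finset (Fin n)) (k : ℕ)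
    (T t : ℕ) (v : Fin n) : Prop :=
  T < t ∧ v ∈ 𝒯 t ∧ ((Finset.Ioo T t).filter (fun t' => v ∈ 𝒯 t')).card < k

open Classical in
/-- `runState 𝒯 k adj s t v = some T` iff vertex `v` has been informed by the end of
step `t`, and was first informed at step `T`.  The source `s` is informed at step `0`;
an uninformed vertex `w` becomes informed at step `t+1` iff exactly one in-neighbor
of `w` transmits at step `t+1`. -/
noncomputable def runState {n : ℕ} (𝒯 : ℕ → Finset (Fin n)) (k : ℕ)
    (adj : Fin n → Fin n → Prop) (s : Fin n) : ℕ → Fin n → Option ℕ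
  | 0 => fun v => if v = s then some 0 else none
  | t + 1 => fun w =>
      match runState 𝒯 k adj s t w with
      | some T => some T
      | none =>
          if ∃! v : Fin n, adj v w ∧
              ∃ T, runState 𝒯 k adj s t v = some T ∧ transmitsAt 𝒯 k T (t + 1) v
          then some (t + 1) else none

/-- `adj` together with source `s` forms an `n`-vertex radio network:
every vertex is reachable from the source by a directed path. -/
def IsNetwork {n : ℕ} (adj : Fin n → Fin n → Prop) (s : Fin n) : Prop :=
  ∀ v : Fin n, Relation.ReflTransGen adj s v

/-- The schedule `𝒯` completes broadcasting on the network `(adj, s)`. -/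
def Completes {n : ℕ} (𝒯 : ℕ → Finset (Fin n)) (k : ℕ)
    (adj : Fin n → Fin n → Prop) (s : Fin n) : Prop :=
  ∀ v : Fin n, ∃ t : ℕ, (runState 𝒯 k adj s t v).isSome

/-- `𝒯` is a correct `k`-shot broadcasting schedule for `n`: it completes
broadcasting on every `n`-vertex radio network. -/
def CorrectSchedule (n k : ℕ) (𝒯 : ℕ → Finset (Fin n)) : Prop :=
  ∀ (adj : Fin n → Fin n → Prop) (s : Fin n), IsNetwork adj s → Completes 𝒯 k adj s
/-- The ceiling of the square root of a natural number: the least `m` with `n ≤ m²`. -/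
def ceilSqrt (n : ℕ) : ℕ :=
  if Nat.sqrt n * Nat.sqrt n = n then Nat.sqrt n else Nat.sqrt n + 1

/-- The smallest prime `p` with `p ≥ m`. -/
def smallestPrimeGE (m : ℕ) : ℕ := Nat.find (Nat.exists_infinite_primes m)

/-- `p` for the Oblivious k-Shot schedule: the smallest prime `≥ ⌈√n⌉`. -/
def obP (n : ℕ) : ℕ := smallestPrimeGE (ceilSqrt n)

/-- `K = ⌈p/(k−2)⌉` for the Oblivious k-Shot schedule (`k ≥ 3`). -/
def obK (n k : ℕ) : ℕ := (obP n + (k - 3)) / (k - 2)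

/-- The point of the plane `(ZMod p) × (ZMod p)` associated with label `i`. -/
def pointOf (p : ℕ) (i : ℕ) : ZMod p × ZMod p := ((i / p : ℕ), (i % p : ℕ))

/-- Membership in the line `L_{a,b}` of direction `a ∈ {0,…,p}` and offset `b ∈ ZMod p`:
`L_{p,b} = {(x,y) : x = b}` and `L_{a,b} = {(x,y) : y = a·x + b}` for `a < p`. -/
def lineMem (p a : ℕ) (b : ZMod p) (q : ZMod p × ZMod p) : Prop :=
  if a = p then q.1 = b else q.2 = (a : ZMod p) * q.1 + b

open Classical in
/-- The Oblivious k-Shot schedule on labels `{0,…,n−1}`.  Steps `t = 1, 2, …` come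
in consecutive blocks of `K+1` steps.  The first step of the `r`-th block
(`r = 0, 1, …`) is the `r`-th Line-Transmit step, with transmission set
`{i < n : point(i) ∈ L_{a,b}}` where `b = r mod p` and `a = ⌊r/p⌋ mod (p+1)`.
The remaining `K` steps of each block are Round-Robin steps; the `j`-th
Round-Robin step overall has transmission set `{j mod p²} ∩ {0,…,n−1}`. -/
noncomputable def obSched (n k : ℕ) : ℕ → Finset (Fin n) := fun t =>
  let p := obP n
  let K := obK n k
  if t = 0 then ∅
  else
    let t' := t - 1
    let r := t' / (K + 1)
    let pos := t' % (K + 1)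
    if pos = 0 then
      Finset.univ.filter
        (fun i : Fin n => lineMem p ((r / p) % (p + 1)) ((r % p : ℕ) : ZMod p) (pointOf p (i : ℕ)))
    else
      Finset.univ.filter (fun i : Fin n => (i : ℕ) = (r * K + (pos - 1)) % (p ^ 2))

open Classical in
/-- The set of active vertices at the end of step `t`: informed vertices having at
least one uninformed out-neighbor. -/
noncomputable def activeSet {n : ℕ} (𝒯 : ℕ → Finset (Fin n)) (k : ℕ)
    (adj : Fin n → Fin n → Prop) (s : Fin n) (t : ℕ) : Finset (Fin n) :=
  Finset.univ.filter (fun v : Fin n =>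
    (runState 𝒯 k adj s t v).isSome ∧ ∃ w : Fin n, adj v w ∧ runState 𝒯 k adj s t w = none)

open Classical in
/-- The progress at the end of step `t`: the number of informed vertices plus the
number of informed vertices all of whose out-neighbors are informed. -/
noncomputable def progressAt {n : ℕ} (𝒯 : ℕ → Finset (Fin n)) (k : ℕ)
    (adj : Fin n → Fin n → Prop) (s : Fin n) (t : ℕ) : ℕ :=
  (Finset.univ.filter (fun v : Fin n => (runState 𝒯 k adj s t v).isSome)).card +
  (Finset.univ.filter (fun v : Fin n => (runState 𝒯 k adj s t v).isSome ∧
      ∀ w : Fin n, adj v w → (runState 𝒯 k adj s t w).isSome)).card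

/-!
A vertex `v` with an uninformed out-neighbor `w` never runs out of shots: it has one Line-Transmit
step per stage, and between two of them that are `k - 1` stages apart the Round-Robin steps run
through all `p²` labels. So any window with `k` scheduled steps of `v` contains a step at which
`v` is scheduled alone, and that step would have informed `w`.

Suppose now that some `v ∈ F` keeps an uninformed out-neighbor `w` during `|F| + m ≤ p + 1`
stages. In each of these stages `v` transmits on the line through its point in the direction of
the stage, and `w` stays uninformed only because another in-neighbor of `w` transmits on the same
line. Lines through one point in distinct directions share no second point, so this produces
`|F| + m` distinct informed in-neighbors of `w`. Those informed from the start are in `F`, hence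
at least `m` of them are new. If no such `v` exists, every vertex of `F` has become inactive.
-/

section KShotSemantics

variable {n : ℕ} {𝒯 : ℕ → Finset (Fin n)} {k : ℕ} {adj : Fin n → Fin n → Prop} {s : Fin n}
  {t t₀ t₁ T : ℕ} {v w : Fin n}

theorem runState_succ_of_eq_some (h : runState 𝒯 k adj s t v = some T) :
    runState 𝒯 k adj s (t + 1) v = some T := by
  simp only [runState, h]

theorem runState_eq_some_of_le (ht : t₀ ≤ t₁) (h : runState 𝒯 k adj s t₀ v = some T) :
    runState 𝒯 k adj s t₁ v = some T := by
  induction ht with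
  | refl => exact h
  | step _ ih => exact runState_succ_of_eq_some ih

theorem isSome_runState_of_le (ht : t₀ ≤ t₁) (h : (runState 𝒯 k adj s t₀ v).isSome) :
    (runState 𝒯 k adj s t₁ v).isSome := by
  obtain ⟨T, hT⟩ := Option.isSome_iff_exists.1 h
  exact Option.isSome_iff_exists.2 ⟨T, runState_eq_some_of_le ht hT⟩

theorem runState_eq_none_of_le (ht : t₀ ≤ t₁) (h : runState 𝒯 k adj s t₁ v = none) :
    runState 𝒯 k adj s t₀ v = none := by
  rw [← Option.not_isSome_iff_eq_none] at h ⊢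
  exact mt (isSome_runState_of_le ht) h

theorem eq_succ_of_runState_succ_eq_some (h₀ : runState 𝒯 k adj s t v = none)
    (h₁ : runState 𝒯 k adj s (t + 1) v = some T) : T = t + 1 := by
  simp only [runState, h₀] at h₁
  split_ifs at h₁
  exact (Option.some.inj h₁).symm

theorem le_and_runState_self_of_eq_some (h : runState 𝒯 k adj s t v = some T) :
    T ≤ t ∧ runState 𝒯 k adj s T v = some T := by
  induction t with
  | zero =>
    obtain rfl : 0 = T := by
      have h₀ := h
      simp only [runState] at h₀
      split_ifs at h₀
      exact Option.some.inj h₀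
    exact ⟨le_rfl, h⟩
  | succ t ih =>
    cases h₀ : runState 𝒯 k adj s t v with
    | none =>
      obtain rfl := eq_succ_of_runState_succ_eq_some h₀ h
      exact ⟨le_rfl, h⟩
    | some T' =>
      obtain rfl : T' = T := Option.some.inj ((runState_succ_of_eq_some h₀).symm.trans h)
      exact (ih h₀).imp_left Nat.le_succ_of_le

theorem exists_ne_inNeighbor_of_transmitsAt (hw : runState 𝒯 k adj s (t + 1) w = none)
    (hvw : adj v w) (hv : runState 𝒯 k adj s t v = some T)
    (hvt : transmitsAt 𝒯 k T (t + 1) v) :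
    ∃ u ≠ v, adj u w ∧ (runState 𝒯 k adj s t u).isSome ∧ u ∈ 𝒯 (t + 1) := by
  have not_unique : ¬ ∃! u, adj u w ∧
      ∃ T, runState 𝒯 k adj s t u = some T ∧ transmitsAt 𝒯 k T (t + 1) u := fun hu => by
    simp only [runState, runState_eq_none_of_le t.le_succ hw, if_pos hu] at hw
    exact Option.some_ne_none _ hw
  by_contra! alone
  refine not_unique ⟨v, ⟨hvw, T, hv, hvt⟩, ?_⟩
  rintro u ⟨huw, T', hu, hut⟩
  by_contra huv
  exact alone u huv huw (Option.isSome_iff_exists.2 ⟨T', hu⟩) hut.2.1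

/-- Any window containing `k` scheduled steps of a vertex contains a step at which this vertex
alone is scheduled. For such schedules the bound of `k` shots never silences a vertex that is
still needed. -/
def HasSoloSteps (𝒯 : ℕ → Finset (Fin n)) (k : ℕ) : Prop :=
  ∀ (v : Fin n) (a b : ℕ), k ≤ {t ∈ Finset.Ioo a b | v ∈ 𝒯 t}.card →
    ∃ t ∈ Finset.Ioo a b, 𝒯 t = {v}

theorem HasSoloSteps.transmitsAt_of_mem (h𝒯 : HasSoloSteps 𝒯 k) (hvw : adj v w)
    (hv : runState 𝒯 k adj s t v = some T) (hw : runState 𝒯 k adj s t w = none)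
    (hmem : v ∈ 𝒯 (t + 1)) : transmitsAt 𝒯 k T (t + 1) v := by
  induction t using Nat.strong_induction_on with
  | _ t ih =>
  obtain ⟨hTt, hT⟩ := le_and_runState_self_of_eq_some hv
  refine ⟨Nat.lt_succ_of_le hTt, hmem, ?_⟩
  by_contra! hcard
  obtain ⟨τ, hτ, solo⟩ := h𝒯 v T (t + 1) hcard
  obtain ⟨hTτ, hτt⟩ := Finset.mem_Ioo.1 hτ
  obtain ⟨τ, rfl⟩ := Nat.exists_eq_add_one_of_ne_zero (Nat.ne_zero_of_lt hTτ)
  have hvτ : runState 𝒯 k adj s τ v = some T := runState_eq_some_of_le (by lia) hT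
  have transmits : transmitsAt 𝒯 k T (τ + 1) v :=
    ih τ (by lia) hvτ (runState_eq_none_of_le (by lia) hw) (solo ▸ Finset.mem_singleton_self v)
  obtain ⟨u, huv, -, -, hu⟩ :=
    exists_ne_inNeighbor_of_transmitsAt (runState_eq_none_of_le (by lia) hw) hvw hvτ transmits
  exact huv (Finset.mem_singleton.1 (solo ▸ hu))

/-- The transmission sets at the steps of `Θ` form a sunflower with kernel `{v}`: at different
steps of `Θ`, transmissions of `v` can only be jammed by different vertices. -/
def IsSunflowerAt (𝒯 : ℕ → Finset (Fin n)) (v : Fin n) (Θ : Finset ℕ) : Prop :=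
  (∀ τ ∈ Θ, v ∈ 𝒯 τ) ∧ (Θ : Set ℕ).Pairwise fun τ τ' => 𝒯 τ ∩ 𝒯 τ' ⊆ {v}

theorem HasSoloSteps.exists_informed_inNeighbors (h𝒯 : HasSoloSteps 𝒯 k) {Θ : Finset ℕ}
    (hΘ : IsSunflowerAt 𝒯 v Θ) (hΘt : Θ ⊆ Finset.Ioc t₀ t₁) (hvw : adj v w)
    (hv : (runState 𝒯 k adj s t₀ v).isSome) (hw : runState 𝒯 k adj s t₁ w = none) :
    ∃ U : Finset (Fin n), U.card = Θ.card ∧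
      ∀ u ∈ U, adj u w ∧ (runState 𝒯 k adj s t₁ u).isSome := by
  obtain ⟨T, hT⟩ := Option.isSome_iff_exists.1 hv
  have collision : ∀ τ ∈ Θ, ∃ u ≠ v, adj u w ∧ (runState 𝒯 k adj s t₁ u).isSome ∧ u ∈ 𝒯 τ := by
    intro τ hτ
    obtain ⟨hlo, hhi⟩ := Finset.mem_Ioc.1 (hΘt hτ)
    have hvτ := hΘ.1 τ hτ
    obtain ⟨τ, rfl⟩ := Nat.exists_eq_add_one_of_ne_zero (Nat.ne_zero_of_lt hlo)
    have hTτ : runState 𝒯 k adj s τ v = some T := runState_eq_some_of_le (by lia) hT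
    have transmits : transmitsAt 𝒯 k T (τ + 1) v :=
      h𝒯.transmitsAt_of_mem hvw hTτ (runState_eq_none_of_le (by lia) hw) hvτ
    obtain ⟨u, huv, huw, hu, huτ⟩ :=
      exists_ne_inNeighbor_of_transmitsAt (runState_eq_none_of_le hhi hw) hvw hTτ transmits
    exact ⟨u, huv, huw, isSome_runState_of_le (by lia) hu, huτ⟩
  have : Nonempty (Fin n) := ⟨v⟩
  choose! u hu_ne hu_adj hu_informed hu_mem using collision
  have u_injOn : Set.InjOn u Θ := by
    intro τ hτ τ' hτ' huu
    by_contra hne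
    have hu : u τ ∈ 𝒯 τ ∩ 𝒯 τ' := Finset.mem_inter.2 ⟨hu_mem τ hτ, huu ▸ hu_mem τ' hτ'⟩
    exact hu_ne τ hτ (Finset.mem_singleton.1 (hΘ.2 hτ hτ' hne hu))
  refine ⟨Θ.image u, Finset.card_image_of_injOn u_injOn, Finset.forall_mem_image.2 ?_⟩
  exact fun τ hτ => ⟨hu_adj τ hτ, hu_informed τ hτ⟩

end KShotSemantics

section Progress

variable {n : ℕ} {𝒯 : ℕ → Finset (Fin n)} {k : ℕ} {adj : Fin n → Fin n → Prop} {s : Fin n}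
  {t t₀ t₁ m : ℕ} {v w : Fin n}

variable (𝒯 k adj s t) in
open Classical in
/-- The vertices informed by the end of step `t`, the first summand of `progressAt`. -/
noncomputable def informedSet : Finset (Fin n) :=
  Finset.univ.filter (fun v : Fin n => (runState 𝒯 k adj s t v).isSome)

variable (𝒯 k adj s t) in
open Classical in
/-- The informed vertices without uninformed out-neighbors at the end of step `t`, the second
summand of `progressAt`. -/
noncomputable def finishedSet : Finset (Fin n) :=
  Finset.univ.filter (fun v : Fin n => (runState 𝒯 k adj s t v).isSome ∧
      ∀ w : Fin n, adj v w → (runState 𝒯 k adj s t w).isSome)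

theorem progressAt_eq_card_add_card : progressAt 𝒯 k adj s t =
    (informedSet 𝒯 k adj s t).card + (finishedSet 𝒯 k adj s t).card :=
  rfl

theorem mem_informedSet :
    v ∈ informedSet 𝒯 k adj s t ↔ (runState 𝒯 k adj s t v).isSome := by
  simp [informedSet]

theorem mem_finishedSet : v ∈ finishedSet 𝒯 k adj s t ↔
    (runState 𝒯 k adj s t v).isSome ∧ ∀ w, adj v w → (runState 𝒯 k adj s t w).isSome := by
  simp [finishedSet]

theorem mem_activeSet : v ∈ activeSet 𝒯 k adj s t ↔
    (runState 𝒯 k adj s t v).isSome ∧ ∃ w, adj v w ∧ runState 𝒯 k adj s t w = none := by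
  simp [activeSet]

variable (𝒯 k adj s) in
theorem informedSet_mono : Monotone (informedSet 𝒯 k adj s) := fun _ _ ht _ hv =>
  mem_informedSet.2 (isSome_runState_of_le ht (mem_informedSet.1 hv))

variable (𝒯 k adj s) in
theorem finishedSet_mono : Monotone (finishedSet 𝒯 k adj s) := fun _ _ ht _ hv =>
  have ⟨hv, hout⟩ := mem_finishedSet.1 hv
  mem_finishedSet.2 ⟨isSome_runState_of_le ht hv, fun w hw => isSome_runState_of_le ht (hout w hw)⟩

theorem disjoint_finishedSet_activeSet :
    Disjoint (finishedSet 𝒯 k adj s t) (activeSet 𝒯 k adj s t) := by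
  rw [Finset.disjoint_left]
  intro v hfin hact
  obtain ⟨-, w, hvw, hw⟩ := mem_activeSet.1 hact
  exact Option.isSome_iff_ne_none.1 ((mem_finishedSet.1 hfin).2 w hvw) hw

theorem progressAt_add_card_activeSet_le (ht : t₀ ≤ t₁)
    (h : activeSet 𝒯 k adj s t₀ ⊆ finishedSet 𝒯 k adj s t₁) :
    progressAt 𝒯 k adj s t₀ + (activeSet 𝒯 k adj s t₀).card ≤ progressAt 𝒯 k adj s t₁ := by
  have hfin := Finset.card_le_card (Finset.union_subset (finishedSet_mono 𝒯 k adj s ht) h)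
  rw [Finset.card_union_of_disjoint disjoint_finishedSet_activeSet] at hfin
  have hinf := Finset.card_le_card (informedSet_mono 𝒯 k adj s ht)
  rw [progressAt_eq_card_add_card, progressAt_eq_card_add_card]
  lia

theorem progressAt_add_card_le_of_inNeighbors (ht : t₀ ≤ t₁)
    (hw : runState 𝒯 k adj s t₀ w = none) {U : Finset (Fin n)}
    (hU : ∀ u ∈ U, adj u w ∧ (runState 𝒯 k adj s t₁ u).isSome) :
    progressAt 𝒯 k adj s t₀ + U.card ≤
      progressAt 𝒯 k adj s t₁ + (activeSet 𝒯 k adj s t₀).card := by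
  have hUsub : U ⊆ activeSet 𝒯 k adj s t₀ ∪
      (informedSet 𝒯 k adj s t₁ \ informedSet 𝒯 k adj s t₀) := by
    intro u hu
    obtain ⟨huw, hu₁⟩ := hU u hu
    rw [Finset.mem_union, Finset.mem_sdiff, mem_activeSet, mem_informedSet, mem_informedSet]
    by_cases hu₀ : (runState 𝒯 k adj s t₀ u).isSome
    · exact Or.inl ⟨hu₀, w, huw, hw⟩
    · exact Or.inr ⟨hu₁, hu₀⟩
  have hUcard := (Finset.card_le_card hUsub).trans (Finset.card_union_le _ _)
  have hinf := Finset.card_sdiff_add_card_eq_card (informedSet_mono 𝒯 k adj s ht)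
  have hfin := Finset.card_le_card (finishedSet_mono 𝒯 k adj s ht)
  rw [progressAt_eq_card_add_card, progressAt_eq_card_add_card]
  lia

theorem HasSoloSteps.progressAt_add_le (h𝒯 : HasSoloSteps 𝒯 k) (ht : t₀ ≤ t₁)
    (hm : m ≤ (activeSet 𝒯 k adj s t₀).card)
    (hsun : ∀ v ∈ activeSet 𝒯 k adj s t₀, ∃ Θ ⊆ Finset.Ioc t₀ t₁,
      IsSunflowerAt 𝒯 v Θ ∧ Θ.card = (activeSet 𝒯 k adj s t₀).card + m) :
    progressAt 𝒯 k adj s t₀ + m ≤ progressAt 𝒯 k adj s t₁ := by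
  by_cases hall : activeSet 𝒯 k adj s t₀ ⊆ finishedSet 𝒯 k adj s t₁
  · have := progressAt_add_card_activeSet_le ht hall
    lia
  · obtain ⟨v, hvact, hvfin⟩ := Finset.not_subset.1 hall
    have hv := (mem_activeSet.1 hvact).1
    obtain ⟨w, hvw, hw⟩ : ∃ w, adj v w ∧ runState 𝒯 k adj s t₁ w = none := by
      simpa [mem_finishedSet, isSome_runState_of_le ht hv] using hvfin
    obtain ⟨Θ, hΘt, hΘ, hΘcard⟩ := hsun v hvact
    obtain ⟨U, hUcard, hU⟩ := h𝒯.exists_informed_inNeighbors hΘ hΘt hvw hv hw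
    have := progressAt_add_card_le_of_inNeighbors ht (runState_eq_none_of_le ht hw) hU
    lia

end Progress

section AffinePlane

variable {p : ℕ}

theorem exists_lt_lineMem [NeZero p] (a : ℕ) (q : ZMod p × ZMod p) :
    ∃ b < p, lineMem p a (b : ZMod p) q := by
  unfold lineMem
  split_ifs with ha
  · exact ⟨q.1.val, ZMod.val_lt _, (ZMod.natCast_zmod_val _).symm⟩
  · exact ⟨(q.2 - a * q.1).val, ZMod.val_lt _, by simp⟩

theorem lineMem_offset_unique {a : ℕ} {b b' : ZMod p} {q : ZMod p × ZMod p}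
    (h : lineMem p a b q) (h' : lineMem p a b' q) : b = b' := by
  unfold lineMem at h h'
  split_ifs at h h' with ha
  · exact h.symm.trans h'
  · exact add_left_cancel (h.symm.trans h')

theorem eq_of_lineMem_of_ne [Fact p.Prime] {a a' : ℕ} (ha : a ≤ p) (ha' : a' ≤ p) (hne : a ≠ a')
    {b b' : ZMod p} {q q' : ZMod p × ZMod p} (hq : lineMem p a b q) (hq' : lineMem p a b q')
    (hq₂ : lineMem p a' b' q) (hq₂' : lineMem p a' b' q') : q = q' := by
  unfold lineMem at hq hq' hq₂ hq₂'
  split_ifs at hq hq' hq₂ hq₂' with hap hap' hap'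
  · exact absurd (hap.trans hap'.symm) hne
  · have hx : q.1 = q'.1 := hq.trans hq'.symm
    exact Prod.ext hx (by rw [hq₂, hq₂', hx])
  · have hx : q.1 = q'.1 := hq₂.trans hq₂'.symm
    exact Prod.ext hx (by rw [hq, hq', hx])
  · have hslope : (a : ZMod p) - a' ≠ 0 := sub_ne_zero.2 fun h =>
      hne (CharP.natCast_injOn_Iio (ZMod p) p (by grind) (by grind) h)
    have hx : q.1 = q'.1 := by
      have : ((a : ZMod p) - a') * (q.1 - q'.1) = 0 := by
        linear_combination hq₂ - hq + hq' - hq₂'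
      exact sub_eq_zero.1 ((mul_eq_zero.1 this).resolve_left hslope)
    exact Prod.ext hx (by rw [hq, hq', hx])

theorem pointOf_injOn (p : ℕ) : Set.InjOn (pointOf p) (Set.Iio (p ^ 2)) := by
  intro i hi j hj hij
  have hp : 0 < p := Nat.pos_of_ne_zero (by rintro rfl; simp at hi)
  rw [Set.mem_Iio, sq] at hi hj
  obtain ⟨hdiv, hmod⟩ := Prod.ext_iff.1 hij
  have hdiv : i / p = j / p := CharP.natCast_injOn_Iio (ZMod p) p
    (Nat.div_lt_of_lt_mul hi) (Nat.div_lt_of_lt_mul hj) hdiv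
  have hmod : i % p = j % p := CharP.natCast_injOn_Iio (ZMod p) p
    (Nat.mod_lt i hp) (Nat.mod_lt j hp) hmod
  rw [← Nat.div_add_mod i p, ← Nat.div_add_mod j p, hdiv, hmod]

end AffinePlane

section Parameters

theorem prime_smallestPrimeGE (m : ℕ) : (smallestPrimeGE m).Prime :=
  (Nat.find_spec (Nat.exists_infinite_primes m)).2

theorem le_smallestPrimeGE (m : ℕ) : m ≤ smallestPrimeGE m :=
  (Nat.find_spec (Nat.exists_infinite_primes m)).1

theorem le_ceilSqrt_sq (n : ℕ) : n ≤ ceilSqrt n ^ 2 := by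
  rw [sq, ceilSqrt]
  split_ifs with h
  · exact h.ge
  · exact (Nat.lt_succ_sqrt n).le

instance fact_prime_obP (n : ℕ) : Fact (obP n).Prime :=
  ⟨prime_smallestPrimeGE _⟩

theorem obP_pos (n : ℕ) : 0 < obP n :=
  (prime_smallestPrimeGE _).pos

theorem le_obP_sq (n : ℕ) : n ≤ obP n ^ 2 :=
  (le_ceilSqrt_sq n).trans (Nat.pow_le_pow_left (le_smallestPrimeGE _) 2)

theorem le_obP_of_sq_le {n k : ℕ} (h : k ^ 2 ≤ n) : k ≤ obP n :=
  (Nat.pow_le_pow_iff_left two_ne_zero).1 (h.trans (le_obP_sq n))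

theorem obP_le_mul_obK (n : ℕ) {k : ℕ} (hk : 3 ≤ k) : obP n ≤ (k - 2) * obK n k := by
  have hK : obK n k = obP n ⌈/⌉ (k - 2) := by
    rw [Nat.ceilDiv_eq_add_pred_div, obK]
    congr 1
    lia
  rw [hK, ← smul_eq_mul]
  exact le_smul_ceilDiv (by lia)

theorem obK_pos (n : ℕ) {k : ℕ} (hk : 3 ≤ k) : 0 < obK n k :=
  Nat.pos_of_mul_pos_left ((obP_pos n).trans_le (obP_le_mul_obK n hk))

theorem pointOf_val_injective (n : ℕ) :
    Function.Injective fun v : Fin n => pointOf (obP n) v := fun u v h =>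
  Fin.ext (pointOf_injOn (obP n) (u.2.trans_le (le_obP_sq n)) (v.2.trans_le (le_obP_sq n)) h)

end Parameters

section Schedule

variable {n k : ℕ}

variable (n k) in
/-- The step at which the `r`-th Line-Transmit takes place, steps being counted from `1` and
Line-Transmits from `0`. -/
def lineStep (r : ℕ) : ℕ := r * (obK n k + 1) + 1

variable (n k) in
/-- The step of the `j`-th Round-Robin transmission, where `j` counts from `0`: it is preceded by
`j` Round-Robin and `j / K + 1` Line-Transmit steps. -/
def roundRobinStep (j : ℕ) : ℕ := j + j / obK n k + 2

variable (n k) in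
/-- The stage, counted from `0`, to which the step `t ≥ 1` belongs. -/
def stageOf (t : ℕ) : ℕ := (t - 1) / (obK n k + 1) / obP n

theorem lineStep_injective : Function.Injective (lineStep n k) := fun _ _ h =>
  Nat.eq_of_mul_eq_mul_right (obK n k).succ_pos (Nat.succ.inj h)

theorem stageOf_lineStep (r : ℕ) : stageOf n k (lineStep n k r) = r / obP n := by
  simp [stageOf, lineStep]

theorem lineStep_lt_roundRobinStep {r j : ℕ} (hK : 0 < obK n k) (h : r * obK n k ≤ j) :
    lineStep n k r < roundRobinStep n k j := by
  have := (Nat.le_div_iff_mul_le hK).2 h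
  rw [lineStep, roundRobinStep, mul_add_one]
  lia

theorem roundRobinStep_lt_lineStep {r j : ℕ} (hK : 0 < obK n k) (h : j < r * obK n k) :
    roundRobinStep n k j < lineStep n k r := by
  have := (Nat.div_lt_iff_lt_mul hK).2 h
  rw [lineStep, roundRobinStep, mul_add_one]
  lia

theorem exists_eq_lineStep_or_roundRobinStep (n k : ℕ) {t : ℕ} (ht : t ≠ 0) :
    (∃ r, t = lineStep n k r) ∨ ∃ j, t = roundRobinStep n k j := by
  obtain ⟨t, rfl⟩ := Nat.exists_eq_add_one_of_ne_zero ht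
  have hdiv := Nat.div_add_mod' t (obK n k + 1)
  have hmod := Nat.mod_lt t (obK n k).succ_pos
  set r := t / (obK n k + 1)
  set i := t % (obK n k + 1)
  rcases Nat.eq_zero_or_pos i with hi | hi
  · exact Or.inl ⟨r, by rw [lineStep]; lia⟩
  · have hj : (r * obK n k + (i - 1)) / obK n k = r := by
      rw [Nat.div_eq_iff (by lia)]
      lia
    refine Or.inr ⟨r * obK n k + (i - 1), ?_⟩
    rw [roundRobinStep, hj]
    rw [mul_add_one] at hdiv
    lia

theorem mem_obSched_lineStep {r : ℕ} {v : Fin n} : v ∈ obSched n k (lineStep n k r) ↔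
    lineMem (obP n) (r / obP n % (obP n + 1)) ((r % obP n : ℕ) : ZMod (obP n))
      (pointOf (obP n) v) := by
  rw [lineStep]
  simp [obSched]

theorem mem_obSched_roundRobinStep {j : ℕ} {v : Fin n} (hK : 0 < obK n k) :
    v ∈ obSched n k (roundRobinStep n k j) ↔ (v : ℕ) = j % obP n ^ 2 := by
  have hstep : roundRobinStep n k j - 1 = (obK n k + 1) * (j / obK n k) + (j % obK n k + 1) := by
    have := Nat.div_add_mod j (obK n k)
    rw [roundRobinStep, add_one_mul]
    lia
  have hpos : j % obK n k + 1 < obK n k + 1 := Nat.succ_lt_succ (Nat.mod_lt j hK)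
  have hdiv : (roundRobinStep n k j - 1) / (obK n k + 1) = j / obK n k := by
    rw [hstep, Nat.mul_add_div (obK n k).succ_pos, Nat.div_eq_of_lt hpos, add_zero]
  have hmod : (roundRobinStep n k j - 1) % (obK n k + 1) = j % obK n k + 1 := by
    rw [hstep, Nat.mul_add_mod, Nat.mod_eq_of_lt hpos]
  have hne : roundRobinStep n k j ≠ 0 := Nat.succ_ne_zero _
  simp [obSched, hne, hdiv, hmod, Nat.div_add_mod']

theorem obSched_roundRobinStep_eq_singleton {j : ℕ} {v : Fin n} (hK : 0 < obK n k)
    (hv : v ∈ obSched n k (roundRobinStep n k j)) :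
    obSched n k (roundRobinStep n k j) = {v} := by
  rw [Finset.eq_singleton_iff_unique_mem]
  refine ⟨hv, fun u hu => Fin.ext ?_⟩
  rw [mem_obSched_roundRobinStep hK] at hu hv
  exact hu.trans hv.symm

theorem eq_of_mem_obSched_lineStep {r r' : ℕ} {v : Fin n}
    (hr : v ∈ obSched n k (lineStep n k r)) (hr' : v ∈ obSched n k (lineStep n k r'))
    (hstage : r / obP n = r' / obP n) : r = r' := by
  rw [mem_obSched_lineStep] at hr hr'
  rw [← hstage] at hr'
  have hoffset : r % obP n = r' % obP n := CharP.natCast_injOn_Iio (ZMod (obP n)) (obP n)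
    (Nat.mod_lt r (obP_pos n)) (Nat.mod_lt r' (obP_pos n)) (lineMem_offset_unique hr hr')
  rw [← Nat.div_add_mod r (obP n), ← Nat.div_add_mod r' (obP n), hstage, hoffset]

theorem exists_eq_lineStep_of_ne_singleton {t : ℕ} {v : Fin n} (hK : 0 < obK n k) (ht : t ≠ 0)
    (hv : v ∈ obSched n k t) (hne : obSched n k t ≠ {v}) : ∃ r, t = lineStep n k r := by
  refine (exists_eq_lineStep_or_roundRobinStep n k ht).resolve_right ?_
  rintro ⟨j, rfl⟩
  exact hne (obSched_roundRobinStep_eq_singleton hK hv)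

theorem exists_solo_between_lineStep (hk : 3 ≤ k) (v : Fin n) {r r' : ℕ}
    (h : r + (k - 2) * obP n ≤ r') :
    ∃ t ∈ Finset.Ioo (lineStep n k r) (lineStep n k r'), obSched n k t = {v} := by
  have hK := obK_pos n hk
  obtain ⟨j, hj, hjv⟩ : ∃ j ∈ Finset.Ico (r * obK n k) (r * obK n k + obP n ^ 2),
      j % obP n ^ 2 = v := by
    rw [← Finset.mem_image, Nat.image_Ico_mod, Finset.mem_range]
    exact v.2.trans_le (le_obP_sq n)
  obtain ⟨hlo, hhi⟩ := Finset.mem_Ico.1 hj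
  have hj_lt : j < r' * obK n k := calc
    j < r * obK n k + obP n ^ 2 := hhi
    _ ≤ r * obK n k + obP n * ((k - 2) * obK n k) := by
      rw [sq]
      gcongr
      exact obP_le_mul_obK n hk
    _ = (r + (k - 2) * obP n) * obK n k := by ring
    _ ≤ r' * obK n k := Nat.mul_le_mul_right _ h
  exact ⟨roundRobinStep n k j,
    Finset.mem_Ioo.2 ⟨lineStep_lt_roundRobinStep hK hlo, roundRobinStep_lt_lineStep hK hj_lt⟩,
    obSched_roundRobinStep_eq_singleton hK ((mem_obSched_roundRobinStep hK).2 hjv.symm)⟩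

theorem add_mul_le_of_div_add_lt_div {p r r' c : ℕ} (hp : 0 < p) (h : r / p + c < r' / p) :
    r + c * p ≤ r' := calc
  r + c * p ≤ (r / p + 1) * p + c * p :=
    Nat.add_le_add_right (add_one_mul (r / p) p ▸ (Nat.lt_div_mul_add hp).le) _
  _ = (r / p + c + 1) * p := by ring
  _ ≤ r' := (Nat.mul_le_mul_right p h).trans (Nat.div_mul_le_self r' p)

theorem card_le_succ_of_injOn_of_forall_le_add {α : Type*} {A : Finset α} {f : α → ℕ} {c : ℕ}
    (hf : Set.InjOn f A) (h : ∀ x ∈ A, ∀ y ∈ A, f y ≤ f x + c) : A.card ≤ c + 1 := by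
  rcases A.eq_empty_or_nonempty with rfl | hne
  · simp
  · obtain ⟨x, hx, hmin⟩ := A.exists_min_image f hne
    have hmaps : Set.MapsTo f A (Finset.Icc (f x) (f x + c)) := fun y hy =>
      Finset.mem_Icc.2 ⟨hmin y hy, h x hx y hy⟩
    have hcard := Finset.card_le_card_of_injOn f hmaps hf
    rw [Nat.card_Icc] at hcard
    lia

theorem hasSoloSteps_obSched (n : ℕ) (hk : 3 ≤ k) : HasSoloSteps (obSched n k) k := by
  intro v a b
  contrapose!
  intro no_solo
  set A := {t ∈ Finset.Ioo a b | v ∈ obSched n k t} with hA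
  have on_line : ∀ t ∈ A, ∃ r, t = lineStep n k r := fun t ht => by
    obtain ⟨hab, hv⟩ := Finset.mem_filter.1 ht
    exact exists_eq_lineStep_of_ne_singleton (obK_pos n hk)
      (Nat.ne_zero_of_lt (Finset.mem_Ioo.1 hab).1) hv (no_solo t hab)
  have stageOf_injOn : Set.InjOn (stageOf n k) A := by
    intro t ht t' ht' hstage
    obtain ⟨⟨r, rfl⟩, r', rfl⟩ := And.intro (on_line t ht) (on_line t' ht')
    rw [stageOf_lineStep, stageOf_lineStep] at hstage
    rw [eq_of_mem_obSched_lineStep (Finset.mem_filter.1 ht).2 (Finset.mem_filter.1 ht').2 hstage]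
  have stageOf_le : ∀ t ∈ A, ∀ t' ∈ A, stageOf n k t' ≤ stageOf n k t + (k - 2) := by
    intro t ht t' ht'
    by_contra! hlt
    obtain ⟨⟨r, rfl⟩, r', rfl⟩ := And.intro (on_line t ht) (on_line t' ht')
    rw [stageOf_lineStep, stageOf_lineStep] at hlt
    obtain ⟨τ, hτ, solo⟩ := exists_solo_between_lineStep hk v
      (add_mul_le_of_div_add_lt_div (obP_pos n) hlt)
    simp only [hA, Finset.mem_filter, Finset.mem_Ioo] at ht ht' hτ
    exact no_solo τ (Finset.mem_Ioo.2 (by lia)) solo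
  have := card_le_succ_of_injOn_of_forall_le_add stageOf_injOn stageOf_le
  lia

theorem exists_mem_obSched_lineStep (k : ℕ) (v : Fin n) (c : ℕ) :
    ∃ r, r / obP n = c ∧ v ∈ obSched n k (lineStep n k r) := by
  obtain ⟨b, hb, hline⟩ := exists_lt_lineMem (c % (obP n + 1)) (pointOf (obP n) v)
  have hdiv : (obP n * c + b) / obP n = c := by
    rw [Nat.mul_add_div (obP_pos n), Nat.div_eq_of_lt hb, add_zero]
  have hmod : (obP n * c + b) % obP n = b := by
    rw [Nat.mul_add_mod, Nat.mod_eq_of_lt hb]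
  refine ⟨obP n * c + b, hdiv, ?_⟩
  rwa [mem_obSched_lineStep, hdiv, hmod]

theorem obSched_lineStep_inter_subset {r r' : ℕ} {v : Fin n}
    (hr : v ∈ obSched n k (lineStep n k r)) (hr' : v ∈ obSched n k (lineStep n k r'))
    (hdir : ¬ r / obP n ≡ r' / obP n [MOD obP n + 1]) :
    obSched n k (lineStep n k r) ∩ obSched n k (lineStep n k r') ⊆ {v} := by
  intro u hu
  obtain ⟨hur, hur'⟩ := Finset.mem_inter.1 hu
  rw [mem_obSched_lineStep] at hr hr' hur hur'
  have dir_le (c : ℕ) : c % (obP n + 1) ≤ obP n := Nat.le_of_lt_succ (Nat.mod_lt c (by lia))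
  exact Finset.mem_singleton.2 (pointOf_val_injective n
    (eq_of_lineMem_of_ne (dir_le _) (dir_le _) hdir hur hr hur' hr'))

theorem lineStep_mem_Ioc {r c d : ℕ} (hc : c ≤ r / obP n) (hd : r / obP n < d) :
    lineStep n k r ∈ Finset.Ioc (c * (obP n * (obK n k + 1))) (d * (obP n * (obK n k + 1))) := by
  have hlo : c * obP n ≤ r := (Nat.le_div_iff_mul_le (obP_pos n)).1 hc
  have hhi : r < d * obP n := (Nat.div_lt_iff_lt_mul (obP_pos n)).1 hd
  rw [Finset.mem_Ioc, ← mul_assoc, ← mul_assoc, lineStep, Nat.lt_succ_iff]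
  refine ⟨Nat.mul_le_mul_right _ hlo, le_trans ?_ (Nat.mul_le_mul_right _ hhi)⟩
  rw [Nat.succ_mul]
  lia

theorem exists_isSunflowerAt_obSched (k : ℕ) (v : Fin n) (σ : ℕ) {ℓ : ℕ} (hℓ : ℓ ≤ obP n + 1) :
    ∃ Θ ⊆ Finset.Ioc (σ * (obP n * (obK n k + 1))) ((σ + ℓ) * (obP n * (obK n k + 1))),
      IsSunflowerAt (obSched n k) v Θ ∧ Θ.card = ℓ := by
  choose r hr_stage hr_mem using exists_mem_obSched_lineStep k v
  let step (i : ℕ) : ℕ := lineStep n k (r (σ + i))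
  have step_injective : Function.Injective step := fun i j hij =>
    Nat.add_left_cancel (by rw [← hr_stage (σ + i), lineStep_injective hij, hr_stage])
  refine ⟨(Finset.range ℓ).image step, ?_, ⟨?_, ?_⟩, ?_⟩
  · rw [Finset.image_subset_iff]
    intro i hi
    rw [Finset.mem_range] at hi
    exact lineStep_mem_Ioc (by rw [hr_stage]; lia) (by rw [hr_stage]; lia)
  · exact Finset.forall_mem_image.2 fun i _ => hr_mem _
  · rw [Finset.coe_image, step_injective.injOn.pairwise_image]
    intro i hi j hj hij
    refine obSched_lineStep_inter_subset (hr_mem _) (hr_mem _) fun hdir => hij ?_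
    rw [hr_stage, hr_stage] at hdir
    rw [Finset.mem_coe, Finset.mem_range] at hi hj
    exact hdir.add_left_cancel'.eq_of_lt_of_lt (hi.trans_le hℓ) (hj.trans_le hℓ)
  · rw [Finset.card_image_of_injective _ step_injective, Finset.card_range]

end Schedule

theorem oblivious_kshot_progress_general {n k : ℕ} (hk : 3 ≤ k)
    (adj : Fin n → Fin n → Prop) (s : Fin n) (σ : ℕ) {m : ℕ} :
    let stageLen := obP n * (obK n k + 1)
    let t₀ := σ * stageLen
    let F := activeSet (obSched n k) k adj s t₀
    m ≤ F.card → F.card + m ≤ obP n + 1 →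
      progressAt (obSched n k) k adj s t₀ + m ≤
        progressAt (obSched n k) k adj s (t₀ + (F.card + m) * stageLen) := by
  intro stageLen t₀ F hm hstages
  refine (hasSoloSteps_obSched n hk).progressAt_add_le (Nat.le_add_right _ _) hm fun v _ => ?_
  rw [← add_mul]
  exact exists_isSunflowerAt_obSched k v σ hstages

/-- Run the Oblivious k-Shot schedule (`3 ≤ k ≤ √n`) under the
`k`-shot semantics on any `n`-vertex radio network.  A stage consists of `p`
consecutive blocks of `K+1` steps, so it has `p·(K+1)` steps.  Let `F` be the set of
active vertices at the beginning of a stage.  If `|F| ≤ k/2`, then during the next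
`2·|F|` stages the progress increases by at least `|F|`. -/
theorem oblivious_kshot_progress (n k : ℕ) (hn : 2 ≤ n) (hk : 3 ≤ k) (hkn : k ^ 2 ≤ n)
    (adj : Fin n → Fin n → Prop) (s : Fin n) (hnet : IsNetwork adj s) (σ : ℕ) :
    let stageLen := obP n * (obK n k + 1)
    let t₀ := σ * stageLen
    let F := activeSet (obSched n k) k adj s t₀
    2 * F.card ≤ k →
      progressAt (obSched n k) k adj s t₀ + F.card ≤
        progressAt (obSched n k) k adj s (t₀ + 2 * F.card * stageLen) := by
  intro _ _ F hF
  rw [two_mul] at hF ⊢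
  exact oblivious_kshot_progress_general hk adj s σ le_rfl
    (hF.trans (Nat.le_succ_of_le (le_obP_of_sq_le hkn)))
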